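/- Let f : ℝ² → ℂ be a compactly supported integrable function. If there exists a nonempty open interval I ⊂ (0,∞) such that the Fourier transform of f vanishes on the set {sω : s ∈ I, ω ∈ 𝕊¹} (equivalently, ∫_{ℝ²} f(x) e^{-s x·ω} dx = 0 for all s ∈ I and all unit vectors ω, after analytic continuation), then f ≡ 0 almost everywhere. -/

import Mathlib

open MeasureTheory Set
open scoped RealInnerProductSpace

theorem stmt3_aux_diff (f : EuclideanSpace ℝ (Fin 2) → ℂ)
    (hf : Integrable f) (hsupp : HasCompactSupport f) (w : EuclideanSpace ℝ (Fin 2)) :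
    Differentiable ℂ (fun z : ℂ => ∫ x, f x * Complex.exp (-(z * (⟪x, w⟫ : ℝ)))) := by
  obtain ⟨R, hR⟩ : ∃ R : ℝ, ∀ x, f x ≠ 0 → |(⟪x, w⟫ : ℝ)| ≤ R := by
    have hc : ContinuousOn (fun x : EuclideanSpace ℝ (Fin 2) => (⟪x, w⟫ : ℝ)) (tsupport f) := by
      fun_prop
    obtain ⟨R, hR⟩ := IsCompact.exists_bound_of_continuousOn hsupp hc
    exact ⟨R, fun x hx => hR x (subset_tsupport f hx)⟩
  have hexp : ∀ (z : ℂ) x, f x ≠ 0 →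
      ‖Complex.exp (-(z * (⟪x, w⟫ : ℝ)))‖ ≤ Real.exp (‖z‖ * R) := by
    intro z x hx
    refine (Complex.norm_exp_le_exp_norm _).trans (Real.exp_le_exp.2 ?_)
    rw [norm_neg, norm_mul, Complex.norm_real]
    exact mul_le_mul_of_nonneg_left (hR x hx) (norm_nonneg _)
  have hmeas : ∀ z : ℂ, AEStronglyMeasurable
      (fun x => f x * Complex.exp (-(z * (⟪x, w⟫ : ℝ)))) volume := fun z =>
    hf.1.mul (Continuous.aestronglyMeasurable (by fun_prop))
  intro z₀
  have key := hasDerivAt_integral_of_dominated_loc_of_deriv_le (μ := volume)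
    (F := fun (z : ℂ) x => f x * Complex.exp (-(z * (⟪x, w⟫ : ℝ))))
    (F' := fun (z : ℂ) x => f x * (Complex.exp (-(z * (⟪x, w⟫ : ℝ))) * (-((⟪x, w⟫ : ℝ) : ℂ))))
    (bound := fun x => ‖f x‖ * (Real.exp ((‖z₀‖ + 1) * R) * R))
    (s := Metric.ball z₀ 1) (x₀ := z₀) (Metric.ball_mem_nhds _ one_pos)
    (Filter.Eventually.of_forall hmeas) ?_ ?_ ?_ (hf.norm.mul_const _) ?_
  · exact key.2.differentiableAt
  · refine (hf.norm.mul_const (Real.exp (‖z₀‖ * R))).mono' (hmeas z₀) ?_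
    filter_upwards with x
    by_cases hx : f x = 0
    · simp [hx]
    · rw [norm_mul]
      exact mul_le_mul_of_nonneg_left (hexp z₀ x hx) (norm_nonneg _)
  · exact hf.1.mul (Continuous.aestronglyMeasurable (by fun_prop))
  · filter_upwards with x z hz
    by_cases hx : f x = 0
    · simp [hx]
    · have hR0 : 0 ≤ R := (abs_nonneg _).trans (hR x hx)
      have hz' : ‖z‖ ≤ ‖z₀‖ + 1 := by
        have h1 : ‖z - z₀‖ < 1 := by simpa [dist_eq_norm] using hz
        have h2 := norm_le_norm_add_norm_sub' z z₀
        linarith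
      rw [norm_mul, norm_mul, norm_neg, Complex.norm_real]
      refine mul_le_mul_of_nonneg_left ?_ (norm_nonneg _)
      refine mul_le_mul ((hexp z x hx).trans (Real.exp_le_exp.2 ?_)) (hR x hx) (norm_nonneg _)
        (Real.exp_pos _).le
      exact mul_le_mul_of_nonneg_right hz' hR0
  · filter_upwards with x z _
    have h1 : HasDerivAt (fun z : ℂ => -(z * ((⟪x, w⟫ : ℝ) : ℂ))) (-((⟪x, w⟫ : ℝ) : ℂ)) z := by
      have h2 := ((hasDerivAt_id z).mul_const ((⟪x, w⟫ : ℝ) : ℂ)).fun_neg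
      rw [one_mul] at h2
      exact h2
    exact h1.cexp.const_mul (f x)

open FourierTransform in
theorem stmt3_aux_inj (f : EuclideanSpace ℝ (Fin 2) → ℂ)
    (hf : Integrable f) (h : ∀ ξ, 𝓕 f ξ = 0) : f =ᵐ[volume] 0 := by
  apply ae_eq_zero_of_integral_contDiff_smul_eq_zero hf.locallyIntegrable
  intro g g_smooth g_cpt
  have hg₁ : HasCompactSupport (Complex.ofRealCLM ∘ g) := g_cpt.comp_left rfl
  have hg₂ : ContDiff ℝ (⊤ : ℕ∞) (Complex.ofRealCLM ∘ g) := by fun_prop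
  let G := hg₁.toSchwartzMap hg₂
  have key := VectorFourier.integral_fourierIntegral_smul_eq_flip
    (L := innerₗ (EuclideanSpace ℝ (Fin 2))) (f := f)
    (g := (𝓕⁻ G : SchwartzMap (EuclideanSpace ℝ (Fin 2)) ℂ))
    (μ := volume) (ν := volume)
    Real.continuous_fourierChar continuous_inner hf (SchwartzMap.integrable _)
  have h0 : ∀ ξ, VectorFourier.fourierIntegral Real.fourierChar volume
    (innerₗ (EuclideanSpace ℝ (Fin 2))) f ξ = 0 := h
  have h1 : ∀ x, VectorFourier.fourierIntegral Real.fourierChar volume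
    (innerₗ (EuclideanSpace ℝ (Fin 2))).flip
      (𝓕⁻ G : SchwartzMap (EuclideanSpace ℝ (Fin 2)) ℂ) x = (g x : ℂ) := by
    intro x
    rw [flip_innerₗ]
    change 𝓕 (⇑(𝓕⁻ G : SchwartzMap (EuclideanSpace ℝ (Fin 2)) ℂ)) x = _
    rw [← SchwartzMap.fourier_coe, FourierTransform.fourier_fourierInv_eq]
    rfl
  simp only [h0, h1, zero_smul, integral_zero] at key
  rw [key]
  congr 1 with x
  simp [mul_comm]

/-- If a compactly supported integrable `f : ℝ² → ℂ` satisfies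
`∫ f(x) e^{-s x·ω} dx = 0` for all `s` in a nonempty open interval of `(0,∞)` and
all unit vectors `ω`, then `f = 0` a.e. -/
theorem stmt3 (f : EuclideanSpace ℝ (Fin 2) → ℂ)
    (hf : Integrable f) (hsupp : HasCompactSupport f)
    (a b : ℝ) (ha : 0 < a) (hab : a < b)
    (hvan : ∀ s ∈ Ioo a b, ∀ ω : EuclideanSpace ℝ (Fin 2), ‖ω‖ = 1 →
      ∫ x, f x * Complex.exp (-(↑(s * ⟪x, ω⟫) : ℂ)) = 0) :
    f =ᵐ[volume] 0 := by
  have hzero : ∀ ω : EuclideanSpace ℝ (Fin 2), ‖ω‖ = 1 → ∀ z : ℂ,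
      ∫ x, f x * Complex.exp (-(z * (⟪x, ω⟫ : ℝ))) = 0 := by
    intro ω hω z
    have hd := stmt3_aux_diff f hf hsupp ω
    have han : AnalyticOnNhd ℂ (fun z : ℂ => ∫ x, f x * Complex.exp (-(z * (⟪x, ω⟫ : ℝ)))) univ :=
      fun z _ => hd.analyticAt z
    obtain ⟨c, hc⟩ := exists_between hab
    refine han.eqOn_zero_of_preconnected_of_frequently_eq_zero (z₀ := (c : ℂ))
      isPreconnected_univ (mem_univ _) ?_ (mem_univ z)
    have ht : Filter.Tendsto (fun t : ℝ => (t : ℂ)) (nhdsWithin c {c}ᶜ)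
        (nhdsWithin (c : ℂ) {(c : ℂ)}ᶜ) := by
      refine tendsto_nhdsWithin_iff.2 ⟨?_, ?_⟩
      · exact (Complex.continuous_ofReal.tendsto c).mono_left nhdsWithin_le_nhds
      · filter_upwards [self_mem_nhdsWithin] with t ht
        simpa using ht
    refine ht.frequently (Filter.Eventually.frequently ?_)
    filter_upwards [nhdsWithin_le_nhds (Ioo_mem_nhds hc.1 hc.2)] with t ht
    simpa using hvan t ht ω hω
  apply stmt3_aux_inj f hf
  intro ξ
  obtain ⟨ω, hω, r, hr⟩ : ∃ ω : EuclideanSpace ℝ (Fin 2), ‖ω‖ = 1 ∧ ∃ r : ℝ, ξ = r • ω := by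
    by_cases h : ξ = 0
    · exact ⟨EuclideanSpace.single 0 1, by simp, 0, by simp [h]⟩
    · have hn : ‖ξ‖ ≠ 0 := norm_ne_zero_iff.2 h
      exact ⟨‖ξ‖⁻¹ • ξ, by simp [norm_smul, hn], ‖ξ‖, by simp [smul_smul, hn]⟩
  rw [Real.fourier_eq', ← hzero ω hω (2 * Real.pi * r * Complex.I)]
  congr 1 with x
  rw [smul_eq_mul, mul_comm, hr, inner_smul_right]
  congr 2
  push_cast
  ring
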